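/- Consider problem DP1^(s) and suppose its optimal value is strictly positive. If (P*_1,…,P*_M) is an optimal solution of DP1^(s), then its active set is disjoint from the bad set and contained in the good set; that is, P*_m = 0 for every m with ‖h_m‖² ≤ ε(h_m), equivalently {m : P*_m > 0} ⊆ G. -/

import Mathlib

open scoped BigOperators Classical
open Finset

noncomputable section

/-- Euclidean inner product on `Fin L → ℝ`. -/
def ip {L : ℕ} (x y : Fin L → ℝ) : ℝ := ∑ i, x i * y i

/-- Squared Euclidean norm on `Fin L → ℝ`. -/
def nsq {L : ℕ} (x : Fin L → ℝ) : ℝ := ∑ i, (x i) ^ 2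

/-- ε(h) = ‖h‖²‖a‖² − ⟨h,a⟩². -/
def eps {L : ℕ} (a h : Fin L → ℝ) : ℝ := nsq h * nsq a - (ip h a) ^ 2

/-- Symmetric-policy computation rate R_h(P). -/
def Rsym {L : ℕ} (a h : Fin L → ℝ) (P : ℝ) : ℝ :=
  (1 / 2) * Real.logb 2 ((1 + P * nsq h) / (nsq a + P * eps a h))

/-- The vector √p∘h with entries √(p_l)·h_l. -/
def sqp {L : ℕ} (p h : Fin L → ℝ) : Fin L → ℝ := fun l => Real.sqrt (p l) * h l

/-- Asymmetric-policy computation rate R(h,p). -/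
def Rasym {L : ℕ} (a h p : Fin L → ℝ) : ℝ :=
  (1 / 2) * Real.logb 2 ((1 + nsq (sqp p h)) /
    (nsq a + (nsq (sqp p h) * nsq a - (ip (sqp p h) a) ^ 2)))

/-- The KKT water-filling-type solution P^KKT_h(λ). -/
def PKKT {L : ℕ} (a h : Fin L → ℝ) (lam : ℝ) : ℝ :=
  if ∃ t : ℝ, h = t • a then 1 / lam - 1 / nsq h
  else (-(2 * nsq h * nsq a - (ip h a) ^ 2) +
      Real.sqrt ((2 * nsq h * nsq a - (ip h a) ^ 2) ^ 2 -
        4 * (nsq h * eps a h) * (nsq a - (ip h a) ^ 2 / lam))) /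
    (2 * (nsq h * eps a h))

/-!
If `m` is bad then `‖h m‖² ≤ ε(h m) ≤ ‖h m‖²‖a‖²`, so the existence of a bad state already forces
`1 ≤ ‖a‖²`. It follows that the rate at a bad state is never positive, and that a state with a
positive rate is not orthogonal to `a`, so that its rate is strictly increasing in the power. A
positive value is therefore earned at some good state, and power spent at a bad state can be moved
there, rescaled by the ratio of the probabilities to keep the average power, with a strict gain.
-/

section Transfer

variable {ι 𝕜 : Type*} [DecidableEq ι] [Field 𝕜] {f P : ι → 𝕜} {i j : ι}

/-- The allocation obtained from `P` by transferring to `j` all that is allocated to `i`, rescaled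
so that the average with weights `f` does not change; meant for `i ≠ j` and `f j ≠ 0`. -/
def transfer (f P : ι → 𝕜) (i j : ι) : ι → 𝕜 :=
  P - Pi.single i (P i) + Pi.single j (f i * P i / f j)

theorem transfer_apply_left (hij : i ≠ j) : transfer f P i j i = 0 := by
  simp [transfer, hij]

theorem transfer_apply_right (hij : i ≠ j) : transfer f P i j j = P j + f i * P i / f j := by
  simp [transfer, hij.symm]

theorem transfer_apply_of_ne {m : ι} (hi : m ≠ i) (hj : m ≠ j) : transfer f P i j m = P m := by
  simp [transfer, hi, hj]

theorem dotProduct_transfer [Fintype ι] (hfj : f j ≠ 0) : f ⬝ᵥ transfer f P i j = f ⬝ᵥ P := by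
  simp only [transfer, dotProduct_add, dotProduct_sub, dotProduct_single,
    mul_div_cancel₀ _ hfj, sub_add_cancel]

theorem transfer_nonneg [LinearOrder 𝕜] [IsStrictOrderedRing 𝕜] (hf : 0 ≤ f) (hP : 0 ≤ P) :
    0 ≤ transfer f P i j := by
  have h_remove : Pi.single i (P i) ≤ P := update_le_iff.2 ⟨le_rfl, fun m _ => hP m⟩
  have h_add : 0 ≤ f i * P i / f j := div_nonneg (mul_nonneg (hf i) (hP i)) (hf j)
  exact add_nonneg (sub_nonneg.2 h_remove) (Pi.single_nonneg.2 h_add)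

end Transfer

section Allocation

variable {ι 𝕜 : Type*} [Fintype ι] [Field 𝕜]

/-- The weighted total utility of the allocation `P`, where `m` has weight `f m` and utility
function `u m`. It is the objective of DP1 when the `u m` are the positive parts of the rates. -/
def totalUtility (f : ι → 𝕜) (u : ι → 𝕜 → 𝕜) (P : ι → 𝕜) : 𝕜 := ∑ m, f m * u m (P m)

variable [LinearOrder 𝕜]

/-- The nonnegative allocations whose average with weights `f` is within the budget `B`: the
feasible set of DP1 when `f` is the distribution of the channel state. -/
def budgetSet (f : ι → 𝕜) (B : 𝕜) : Set (ι → 𝕜) := {P | 0 ≤ P ∧ f ⬝ᵥ P ≤ B}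

variable [IsStrictOrderedRing 𝕜] {f P : ι → 𝕜} {u : ι → 𝕜 → 𝕜} {B : 𝕜} {i j : ι}

theorem transfer_mem_budgetSet [DecidableEq ι] (hf : 0 ≤ f) (hfj : f j ≠ 0)
    (hP : P ∈ budgetSet f B) : transfer f P i j ∈ budgetSet f B :=
  ⟨transfer_nonneg hf hP.1, (dotProduct_transfer hfj).trans_le hP.2⟩

theorem totalUtility_lt_totalUtility_transfer [DecidableEq ι] (hf : 0 ≤ f) (hfj : 0 < f j)
    (hij : i ≠ j) (hui : u i (P i) ≤ u i 0)
    (huj : u j (P j) < u j (P j + f i * P i / f j)) :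
    totalUtility f u P < totalUtility f u (transfer f P i j) := by
  have gain : u j (P j) < u j (transfer f P i j j) := by rwa [transfer_apply_right hij]
  refine Finset.sum_lt_sum (fun m _ => mul_le_mul_of_nonneg_left ?_ (hf m))
    ⟨j, Finset.mem_univ j, mul_lt_mul_of_pos_left gain hfj⟩
  rcases eq_or_ne m j with rfl | hmj
  · exact gain.le
  rcases eq_or_ne m i with rfl | hmi
  · rwa [transfer_apply_left hij]
  · rw [transfer_apply_of_ne hmi hmj]

theorem eq_zero_of_isMaxOn_totalUtility (hf : ∀ m, 0 < f m) (hP : P ∈ budgetSet f B)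
    (hmax : IsMaxOn (totalUtility f u) (budgetSet f B) P) (hij : i ≠ j)
    (hui : u i (P i) ≤ u i 0) (huj : ∀ x, P j < x → u j (P j) < u j x) : P i = 0 := by
  by_contra hne
  have hf0 : 0 ≤ f := fun m => (hf m).le
  have hPi : 0 < P i := (hP.1 i).lt_of_ne' hne
  have more : P j < P j + f i * P i / f j :=
    lt_add_of_pos_right _ (div_pos (mul_pos (hf i) hPi) (hf j))
  exact (totalUtility_lt_totalUtility_transfer hf0 (hf j) hij hui (huj _ more)).not_ge
    (hmax (transfer_mem_budgetSet hf0 (hf j).ne' hP))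

theorem exists_pos_of_totalUtility_pos (hf : 0 ≤ f) (hpos : 0 < totalUtility f u P) :
    ∃ m, 0 < u m (P m) := by
  by_contra! hu
  exact hpos.not_ge
    (Finset.sum_nonpos fun m _ => mul_nonpos_of_nonneg_of_nonpos (hf m) (hu m))

end Allocation

section Rate

variable {L : ℕ} {a h : Fin L → ℝ}

theorem nsq_nonneg (x : Fin L → ℝ) : 0 ≤ nsq x := Finset.sum_nonneg fun _ _ => sq_nonneg _

theorem nsq_pos (hh : h ≠ 0) : 0 < nsq h := by
  obtain ⟨i, hi⟩ := Function.ne_iff.1 hh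
  exact Finset.sum_pos' (fun _ _ => sq_nonneg _) ⟨i, Finset.mem_univ i, sq_pos_of_ne_zero hi⟩

theorem eps_nonneg (a h : Fin L → ℝ) : 0 ≤ eps a h :=
  sub_nonneg.2 (Finset.sum_mul_sq_le_sq_mul_sq Finset.univ h a)

theorem eps_le_nsq_mul_nsq (a h : Fin L → ℝ) : eps a h ≤ nsq h * nsq a :=
  sub_le_self _ (sq_nonneg _)

theorem eps_lt_nsq_mul_nsq (hip : ip h a ≠ 0) : eps a h < nsq h * nsq a :=
  sub_lt_self _ (sq_pos_of_ne_zero hip)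

theorem nsq_pos_of_ip_ne_zero (hip : ip h a ≠ 0) : 0 < nsq a :=
  pos_of_mul_pos_right ((eps_nonneg a h).trans_lt (eps_lt_nsq_mul_nsq hip)) (nsq_nonneg h)

theorem one_le_nsq_of_nsq_le_eps (hh : h ≠ 0) (hbad : nsq h ≤ eps a h) : 1 ≤ nsq a :=
  (le_mul_iff_one_le_right (nsq_pos hh)).1 (hbad.trans (eps_le_nsq_mul_nsq a h))

theorem rsym_nonpos (ha : 1 ≤ nsq a) (hbad : nsq h ≤ eps a h) {x : ℝ} (hx : 0 ≤ x) :
    Rsym a h x ≤ 0 := by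
  have num_nonneg : 0 ≤ 1 + x * nsq h := add_nonneg zero_le_one (mul_nonneg hx (nsq_nonneg h))
  have num_le_den : 1 + x * nsq h ≤ nsq a + x * eps a h := by gcongr
  have den_nonneg := num_nonneg.trans num_le_den
  exact mul_nonpos_of_nonneg_of_nonpos one_half_pos.le <|
    Real.logb_nonpos one_lt_two (div_nonneg num_nonneg den_nonneg)
      (div_le_one_of_le₀ num_le_den den_nonneg)

theorem ip_ne_zero_of_rsym_pos (ha : 1 ≤ nsq a) {x : ℝ} (hx : 0 ≤ x) (hR : 0 < Rsym a h x) :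
    ip h a ≠ 0 := by
  intro orth
  have hbad : nsq h ≤ eps a h := by
    simpa [eps, orth] using le_mul_of_one_le_right (nsq_nonneg h) ha
  exact hR.not_ge (rsym_nonpos ha hbad hx)

theorem rsym_strictMonoOn (hip : ip h a ≠ 0) : StrictMonoOn (Rsym a h) (Set.Ici 0) := by
  have num_pos {x : ℝ} (hx : 0 ≤ x) : 0 < 1 + x * nsq h :=
    add_pos_of_pos_of_nonneg one_pos (mul_nonneg hx (nsq_nonneg h))
  have den_pos {x : ℝ} (hx : 0 ≤ x) : 0 < nsq a + x * eps a h :=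
    add_pos_of_pos_of_nonneg (nsq_pos_of_ip_ne_zero hip) (mul_nonneg hx (eps_nonneg a h))
  intro x hx y hy hxy
  refine mul_lt_mul_of_pos_left (Real.logb_lt_logb one_lt_two
    (div_pos (num_pos hx) (den_pos hx)) ?_) one_half_pos
  rw [div_lt_div_iff₀ (den_pos hx) (den_pos hy)]
  -- The cross products differ by `(y - x) * (‖h‖² ‖a‖² - ε(h))`.
  linarith [mul_pos (sub_pos.2 hxy) (sub_pos.2 (eps_lt_nsq_mul_nsq hip))]

end Rate

theorem stmt5_general {ι : Type*} [Fintype ι] {L : ℕ} (a : Fin L → ℝ) {h : ι → Fin L → ℝ}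
    (hh : ∀ m, h m ≠ 0) {f : ι → ℝ} (hf : ∀ m, 0 < f m) {B : ℝ} {P : ι → ℝ}
    (hP : P ∈ budgetSet f B)
    (hmax : IsMaxOn (totalUtility f fun m x => max 0 (Rsym a (h m) x)) (budgetSet f B) P)
    (hpos : 0 < totalUtility f (fun m x => max 0 (Rsym a (h m) x)) P)
    (m : ι) (hbad : nsq (h m) ≤ eps a (h m)) : P m = 0 := by
  have ha : 1 ≤ nsq a := one_le_nsq_of_nsq_le_eps (hh m) hbad
  have useless : Rsym a (h m) (P m) ≤ 0 := rsym_nonpos ha hbad (hP.1 m)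
  obtain ⟨k, hk⟩ := exists_pos_of_totalUtility_pos (fun m => (hf m).le) hpos
  have rate_pos : 0 < Rsym a (h k) (P k) := by simpa using hk
  have mono := rsym_strictMonoOn (ip_ne_zero_of_rsym_pos ha (hP.1 k) rate_pos)
  have hmk : m ≠ k := by
    rintro rfl
    exact useless.not_gt rate_pos
  refine eq_zero_of_isMaxOn_totalUtility hf hP hmax hmk ?_ fun x hx => ?_
  · exact (max_eq_left useless).trans_le (le_max_left _ _)
  · have rate_lt := mono (hP.1 k) ((hP.1 k).trans hx.le) hx
    rw [max_eq_right rate_pos.le]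
    exact lt_max_of_lt_right rate_lt

/-- Theorem 1: any positive-value optimal solution of DP1^(s) allocates zero
power to every channel state in the bad set; its active set is contained in the good set. -/
theorem stmt5 {L M : ℕ} (hL : 1 ≤ L)
    (a : Fin L → ℝ) (ha : a ≠ 0) (haint : ∀ i, ∃ n : ℤ, a i = (n : ℝ))
    (h : Fin M → Fin L → ℝ) (hh : ∀ m, h m ≠ 0)
    (f : Fin M → ℝ) (hf : ∀ m, 0 < f m) (hfsum : ∑ m, f m = 1)
    (Pbar : ℝ) (hPbar : 0 < Pbar)
    (Pstar : Fin M → ℝ)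
    (hfeas : (∀ m, 0 ≤ Pstar m) ∧ ∑ m, f m * Pstar m ≤ Pbar)
    (hopt : ∀ Q : Fin M → ℝ, (∀ m, 0 ≤ Q m) → ∑ m, f m * Q m ≤ Pbar →
      ∑ m, f m * max 0 (Rsym a (h m) (Q m)) ≤ ∑ m, f m * max 0 (Rsym a (h m) (Pstar m)))
    (hpos : 0 < ∑ m, f m * max 0 (Rsym a (h m) (Pstar m))) :
    ∀ m, nsq (h m) ≤ eps a (h m) → Pstar m = 0 :=
  stmt5_general a hh hf hfeas (fun Q hQ => hopt Q hQ.1 hQ.2) hpos
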